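/- arXiv:0807.4536 — 2 statements merged into one kernel-verified Lean document; each statement's English description precedes it below -/
import Mathlib

section
/- Let α, β ∈ ℂ and k ≥ 0 an integer, and let σ_k be the (k+2)×(k+2) matrix with rows and columns indexed by m ∈ {0,…,k+1} whose entries are: (σ_k)_{m,m} = |α|²·m + |β|²·(k+1−m); (σ_k)_{m,m−1} = α·conj(β)·√(m(k+2−m)) for 1 ≤ m ≤ k+1; (σ_k)_{m−1,m} = conj(α)·β·√(m(k+2−m)) for 1 ≤ m ≤ k+1; and all other entries zero. Then σ_k = (|α|²+|β|²)·((k+1)/2)·I + n_1·J_x + n_2·J_y + n_3·J_z, where J_x, J_y, J_z are the spin matrices of dimension d = k+2 and n_1 = 2·Re(α·conj(β)), n_2 = −2·Im(α·conj(β)), n_3 = |α|² − |β|². In particular, when |α|² + |β|² = 1 one has σ_k = ((k+1)/2)·I + n_1·J_x + n_2·J_y + n_3·J_z with ‖(n_1,n_2,n_3)‖₂ = 1. -/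
open Matrix

/-- The diagonal spin matrix `J_z` of dimension `d`, with `(J_z)_{m,m} = m - (d-1)/2`. -/
noncomputable def Jz (d : ℕ) : Matrix (Fin d) (Fin d) ℂ :=
  Matrix.diagonal (fun m => (((m : ℝ) - ((d : ℝ) - 1) / 2 : ℝ) : ℂ))

/-- The raising operator `J_+` of dimension `d`, with `(J_+)_{m,m-1} = √(m(d-m))`. -/
noncomputable def Jplus (d : ℕ) : Matrix (Fin d) (Fin d) ℂ :=
  fun m m' => if (m : ℕ) = (m' : ℕ) + 1
    then ((Real.sqrt ((m : ℝ) * ((d : ℝ) - (m : ℝ))) : ℝ) : ℂ) else 0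

/-- The lowering operator `J_- = (J_+)†`. -/
noncomputable def Jminus (d : ℕ) : Matrix (Fin d) (Fin d) ℂ := (Jplus d)ᴴ

/-- `J_x = (J_+ + J_-)/2`. -/
noncomputable def Jx (d : ℕ) : Matrix (Fin d) (Fin d) ℂ :=
  (1 / 2 : ℂ) • (Jplus d + Jminus d)

/-- `J_y = (J_+ - J_-)/(2i)`. -/
noncomputable def Jy (d : ℕ) : Matrix (Fin d) (Fin d) ℂ :=
  (1 / (2 * Complex.I) : ℂ) • (Jplus d - Jminus d)


/-- The `k`-th block of the Unruh channel output for the dual-rail input `α|01⟩ + β|10⟩`: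
diagonal entries `|α|² m + |β|² (k+1-m)`, sub-diagonal entries `α β̄ √(m(k+2-m))`,
super-diagonal entries `ᾱ β √(m(k+2-m))`. -/
noncomputable def unruhBlock (α β : ℂ) (k : ℕ) : Matrix (Fin (k + 2)) (Fin (k + 2)) ℂ :=
  fun m m' =>
    if (m : ℕ) = (m' : ℕ) then
      ((‖α‖ ^ 2 * (m : ℝ) + ‖β‖ ^ 2 * ((k : ℝ) + 1 - (m : ℝ)) : ℝ) : ℂ)
    else if (m : ℕ) = (m' : ℕ) + 1 then
      α * (starRingEnd ℂ) β * ((Real.sqrt ((m : ℝ) * ((k : ℝ) + 2 - (m : ℝ))) : ℝ) : ℂ)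
    else if (m' : ℕ) = (m : ℕ) + 1 then
      (starRingEnd ℂ) α * β * ((Real.sqrt ((m' : ℝ) * ((k : ℝ) + 2 - (m' : ℝ))) : ℝ) : ℂ)
    else 0

theorem unruhBlock_eq_aux (α β : ℂ) (k : ℕ) :
    unruhBlock α β k =
      (((‖α‖ ^ 2 + ‖β‖ ^ 2) * (((k : ℝ) + 1) / 2) : ℝ) : ℂ) •
          (1 : Matrix (Fin (k + 2)) (Fin (k + 2)) ℂ) +
        ((2 * (α * (starRingEnd ℂ) β).re : ℝ) : ℂ) • Jx (k + 2) +
        ((-(2 * (α * (starRingEnd ℂ) β).im) : ℝ) : ℂ) • Jy (k + 2) +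
        ((‖α‖ ^ 2 - ‖β‖ ^ 2 : ℝ) : ℂ) • Jz (k + 2) := by
  have hc : (starRingEnd ℂ) α * β = (starRingEnd ℂ) (α * (starRingEnd ℂ) β) := by simp
  ext m m'
  simp only [unruhBlock, Jx, Jy, Jz, Jminus, Jplus, Matrix.add_apply, Matrix.smul_apply,
    Matrix.sub_apply, Matrix.conjTranspose_apply, Matrix.one_apply, Matrix.diagonal_apply,
    smul_eq_mul, Fin.ext_iff]
  rw [hc]
  generalize α * (starRingEnd ℂ) β = w
  by_cases h1 : (m : ℕ) = m'
  · have h2 : ¬ ((m : ℕ) = m' + 1) := by omega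
    have h3 : ¬ ((m' : ℕ) = m + 1) := by omega
    simp only [h1, if_true]
    simp
    ring
  · by_cases h2 : (m : ℕ) = m' + 1
    · have h3 : ¬ ((m' : ℕ) = m + 1) := by omega
      simp only [if_neg h1, if_pos h2, if_neg h3]
      push_cast
      generalize √((m : ℝ) * ((k : ℝ) + 2 - (m : ℝ))) = r
      apply Complex.ext <;> simp <;> ring
    · by_cases h3 : (m' : ℕ) = m + 1
      · simp only [if_neg h1, if_neg h2, if_pos h3]
        push_cast
        generalize √((m' : ℝ) * ((k : ℝ) + 2 - (m' : ℝ))) = r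
        apply Complex.ext <;> simp <;> ring
      · simp [h1, h2, h3]

/-- The Unruh block `σ_k` equals
`(|α|²+|β|²)((k+1)/2) I + n₁ J_x + n₂ J_y + n₃ J_z` with
`n₁ = 2 Re(α β̄)`, `n₂ = -2 Im(α β̄)`, `n₃ = |α|² - |β|²`; in particular, when
`|α|² + |β|² = 1`, `σ_k = ((k+1)/2) I + n₁ J_x + n₂ J_y + n₃ J_z` with `‖n‖₂ = 1`. -/
theorem unruhBlock_eq_spin_combination (α β : ℂ) (k : ℕ) :
    (unruhBlock α β k =
      (((‖α‖ ^ 2 + ‖β‖ ^ 2) * (((k : ℝ) + 1) / 2) : ℝ) : ℂ) •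
          (1 : Matrix (Fin (k + 2)) (Fin (k + 2)) ℂ) +
        ((2 * (α * (starRingEnd ℂ) β).re : ℝ) : ℂ) • Jx (k + 2) +
        ((-(2 * (α * (starRingEnd ℂ) β).im) : ℝ) : ℂ) • Jy (k + 2) +
        ((‖α‖ ^ 2 - ‖β‖ ^ 2 : ℝ) : ℂ) • Jz (k + 2)) ∧
    (‖α‖ ^ 2 + ‖β‖ ^ 2 = 1 →
      (unruhBlock α β k =
        ((((k : ℝ) + 1) / 2 : ℝ) : ℂ) • (1 : Matrix (Fin (k + 2)) (Fin (k + 2)) ℂ) +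
          ((2 * (α * (starRingEnd ℂ) β).re : ℝ) : ℂ) • Jx (k + 2) +
          ((-(2 * (α * (starRingEnd ℂ) β).im) : ℝ) : ℂ) • Jy (k + 2) +
          ((‖α‖ ^ 2 - ‖β‖ ^ 2 : ℝ) : ℂ) • Jz (k + 2)) ∧
      Real.sqrt ((2 * (α * (starRingEnd ℂ) β).re) ^ 2 +
          (-(2 * (α * (starRingEnd ℂ) β).im)) ^ 2 +
          (‖α‖ ^ 2 - ‖β‖ ^ 2) ^ 2) = 1) := by
  refine ⟨unruhBlock_eq_aux α β k, fun h => ⟨?_, ?_⟩⟩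
  · have := unruhBlock_eq_aux α β k
    rwa [h, one_mul] at this
  · rw [Real.sqrt_eq_one]
    have ha : ‖α‖ ^ 2 = α.re ^ 2 + α.im ^ 2 := by
      rw [Complex.sq_norm, Complex.normSq_apply]; ring
    have hb : ‖β‖ ^ 2 = β.re ^ 2 + β.im ^ 2 := by
      rw [Complex.sq_norm, Complex.normSq_apply]; ring
    rw [ha, hb] at h ⊢
    simp only [Complex.mul_re, Complex.mul_im, Complex.conj_re, Complex.conj_im]
    calc _ = (α.re ^ 2 + α.im ^ 2 + (β.re ^ 2 + β.im ^ 2)) ^ 2 := by ring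
      _ = 1 := by rw [h]; norm_num
end

section
/- Let α, β ∈ ℂ with |α|² + |β|² = 1 and let k ≥ 0 be an integer. The (k+2)×(k+2) matrix σ_k with entries (σ_k)_{m,m} = |α|²·m + |β|²·(k+1−m), (σ_k)_{m,m−1} = α·conj(β)·√(m(k+2−m)), (σ_k)_{m−1,m} = conj(α)·β·√(m(k+2−m)) (for 1 ≤ m ≤ k+1), and zero otherwise, has characteristic polynomial ∏_{m=0}^{k+1} (X − m); that is, its eigenvalues are exactly 0, 1, 2, …, k+1, each with multiplicity one. -/
open Matrix

open Polynomial in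
/-- Generating polynomial of the `j`-th eigenvector. -/
noncomputable def genPoly (α β : ℂ) (n j : ℕ) : Polynomial ℂ :=
  (C α * X + C β) ^ j * (C ((starRingEnd ℂ) α) - C ((starRingEnd ℂ) β) * X) ^ (n - j)

open Polynomial in
lemma genPoly_ode (α β : ℂ) (h : α * (starRingEnd ℂ) α + β * (starRingEnd ℂ) β = 1)
    (n j : ℕ) (hj : j ≤ n) :
    (C α * X + C β) * (C ((starRingEnd ℂ) α) * derivative (genPoly α β n j)
      + C ((starRingEnd ℂ) β) * (C (n : ℂ) * genPoly α β n j
        - X * derivative (genPoly α β n j))) = C (j : ℂ) * genPoly α β n j := by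
  obtain ⟨l, rfl⟩ := Nat.exists_eq_add_of_le hj
  generalize ha : (starRingEnd ℂ) α = α' at *
  generalize hb : (starRingEnd ℂ) β = β' at *
  have hC : (C α * C α' + C β * C β' : ℂ[X]) = 1 := by
    rw [← C_mul, ← C_mul, ← C_add, h, C_1]
  have hd : genPoly α β (j + l) j = (C α * X + C β) ^ j * (C α' - C β' * X) ^ l := by
    simp only [genPoly, Nat.add_sub_cancel_left, ha, hb]
  rw [hd]
  have e1 : (C α * X + C β) * derivative ((C α * X + C β) ^ j) =
      C (j : ℂ) * C α * (C α * X + C β) ^ j := by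
    cases j with
    | zero => simp
    | succ j => simp [derivative_pow_succ]; ring
  have e2 : (C α' - C β' * X) * derivative ((C α' - C β' * X) ^ l) =
      - (C (l : ℂ) * C β' * (C α' - C β' * X) ^ l) := by
    cases l with
    | zero => simp
    | succ l => simp [derivative_pow_succ]; ring
  rw [derivative_mul]
  push_cast
  rw [C_add]
  set U := (C α * X + C β) ^ j with hU
  set W := (C α' - C β' * X) ^ l with hW
  linear_combination (C α' - C β' * X) * W * e1 + (C α * X + C β) * U * e2
    + C (j : ℂ) * U * W * hC

open Polynomial in
lemma genPoly_natDegree (α β : ℂ) (n j : ℕ) (hj : j ≤ n) :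
    (genPoly α β n j).natDegree ≤ n := by
  unfold genPoly
  have h1 : (C α * X + C β).natDegree ≤ 1 := by compute_degree
  have h2 : (C ((starRingEnd ℂ) α) - C ((starRingEnd ℂ) β) * X).natDegree ≤ 1 := by compute_degree
  refine (natDegree_mul_le_of_le (natDegree_pow_le_of_le j h1)
    (natDegree_pow_le_of_le (n - j) h2)).trans (by omega)

open Polynomial in
lemma genPoly_ne_zero (α β : ℂ) (h : α * (starRingEnd ℂ) α + β * (starRingEnd ℂ) β = 1)
    (n j : ℕ) : genPoly α β n j ≠ 0 := by
  have key : ¬ (α = 0 ∧ β = 0) := by rintro ⟨rfl, rfl⟩; simp at h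
  unfold genPoly
  refine mul_ne_zero (pow_ne_zero _ fun h0 => key ?_) (pow_ne_zero _ fun h0 => key ?_)
  · have a := congrArg (fun p => coeff p 0) h0
    have b := congrArg (fun p => coeff p 1) h0
    simp [coeff_C] at a b
    exact ⟨b, a⟩
  · have a := congrArg (fun p => coeff p 0) h0
    have b := congrArg (fun p => coeff p 1) h0
    simp [coeff_C] at a b
    exact ⟨a, b⟩

open Polynomial in
/-- Three-term recurrence, written with the shifted index. -/
lemma genPoly_rec_zero (α β : ℂ) (h : α * (starRingEnd ℂ) α + β * (starRingEnd ℂ) β = 1)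
    (n j : ℕ) (hj : j ≤ n) :
    β * (starRingEnd ℂ) β * n * (genPoly α β n j).coeff 0
      + (starRingEnd ℂ) α * β * (genPoly α β n j).coeff 1 = j * (genPoly α β n j).coeff 0 := by
  have e := congrArg (fun p => coeff p 0) (genPoly_ode α β h n j hj)
  simp [mul_coeff_zero, coeff_derivative] at e
  linear_combination e

open Polynomial in
lemma genPoly_rec_succ (α β : ℂ) (h : α * (starRingEnd ℂ) α + β * (starRingEnd ℂ) β = 1)
    (n j : ℕ) (hj : j ≤ n) (m : ℕ) :
    (α * (starRingEnd ℂ) α * (m + 1) + β * (starRingEnd ℂ) β * (n - (m + 1)))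
        * (genPoly α β n j).coeff (m + 1)
      + α * (starRingEnd ℂ) β * (n - m) * (genPoly α β n j).coeff m
      + (starRingEnd ℂ) α * β * (m + 2) * (genPoly α β n j).coeff (m + 2)
      = j * (genPoly α β n j).coeff (m + 1) := by
  have e := congrArg (fun p => coeff p (m + 1)) (genPoly_ode α β h n j hj)
  simp only [add_mul, mul_assoc, coeff_add, coeff_sub, coeff_C_mul, coeff_X_mul,
    coeff_derivative] at e
  cases m with
  | zero => 
    simp [mul_coeff_zero, coeff_derivative] at e ⊢
    linear_combination e
  | succ m =>
    simp only [coeff_X_mul, coeff_derivative] at e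
    push_cast at e ⊢
    linear_combination e

/-- Normalisation weights `√(m!(n-m)!)`. -/
noncomputable def wt (n m : ℕ) : ℝ := Real.sqrt ((m.factorial : ℝ) * ((n - m).factorial : ℝ))

lemma wt_pos (n m : ℕ) : 0 < wt n m := by unfold wt; positivity

lemma wt_sub (n m : ℕ) (h : m + 1 ≤ n) :
    Real.sqrt (((m : ℝ) + 1) * ((n : ℝ) - m)) * wt n m = ((n : ℝ) - m) * wt n (m + 1) := by
  obtain ⟨l, rfl⟩ := Nat.exists_eq_add_of_le h
  have h1 : m + 1 + l - m = l + 1 := by omega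
  have h2 : m + 1 + l - (m + 1) = l := by omega
  have h3 : (((m + 1 + l : ℕ) : ℝ) - m) = l + 1 := by push_cast; ring
  unfold wt
  rw [h1, h2, h3, ← Real.sqrt_mul (by positivity), Nat.factorial_succ, Nat.factorial_succ,
    ← Real.sqrt_sq (show (0 : ℝ) ≤ l + 1 by positivity), ← Real.sqrt_mul (by positivity),
    Real.sqrt_sq (by positivity)]
  congr 1
  push_cast; ring

lemma wt_sup (n m : ℕ) (h : m + 1 ≤ n) :
    Real.sqrt (((m : ℝ) + 1) * ((n : ℝ) - m)) * wt n (m + 1) = ((m : ℝ) + 1) * wt n m := by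
  obtain ⟨l, rfl⟩ := Nat.exists_eq_add_of_le h
  have h1 : m + 1 + l - m = l + 1 := by omega
  have h2 : m + 1 + l - (m + 1) = l := by omega
  have h3 : (((m + 1 + l : ℕ) : ℝ) - m) = l + 1 := by push_cast; ring
  unfold wt
  rw [h1, h2, h3, ← Real.sqrt_mul (by positivity), Nat.factorial_succ, Nat.factorial_succ,
    ← Real.sqrt_sq (show (0 : ℝ) ≤ m + 1 by positivity), ← Real.sqrt_mul (by positivity),
    Real.sqrt_sq (by positivity)]
  congr 1
  push_cast; ring

lemma unruhBlock_row (α β : ℂ) (k : ℕ) (f : ℕ → ℂ) (hf : f (k + 2) = 0) (i : Fin (k + 2)) :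
    (unruhBlock α β k *ᵥ fun m => f m) i =
      ((‖α‖ ^ 2 * (i : ℝ) + ‖β‖ ^ 2 * ((k : ℝ) + 1 - (i : ℝ)) : ℝ) : ℂ) * f i
      + (if (i : ℕ) = 0 then 0 else α * (starRingEnd ℂ) β *
          ((Real.sqrt ((i : ℝ) * ((k : ℝ) + 2 - (i : ℝ))) : ℝ) : ℂ) * f (i - 1))
      + (starRingEnd ℂ) α * β *
        ((Real.sqrt (((i : ℝ) + 1) * ((k : ℝ) + 1 - (i : ℝ))) : ℝ) : ℂ) * f (i + 1) := by
  obtain ⟨i, hi⟩ := i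
  simp only [mulVec, dotProduct, unruhBlock]
  set A : ℂ := ((‖α‖ ^ 2 * (i : ℝ) + ‖β‖ ^ 2 * ((k : ℝ) + 1 - (i : ℝ)) : ℝ) : ℂ) with hA
  set B : ℂ := α * (starRingEnd ℂ) β *
          ((Real.sqrt ((i : ℝ) * ((k : ℝ) + 2 - (i : ℝ))) : ℝ) : ℂ) with hB
  set D : ℂ := (starRingEnd ℂ) α * β *
        ((Real.sqrt (((i : ℝ) + 1) * ((k : ℝ) + 1 - (i : ℝ))) : ℝ) : ℂ) with hD
  have hD' : ∀ m : ℕ, m = i + 1 → (starRingEnd ℂ) α * β *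
        ((Real.sqrt ((m : ℝ) * ((k : ℝ) + 2 - (m : ℝ))) : ℝ) : ℂ) = D := by
    rintro m rfl
    rw [hD]
    have e : (((i + 1 : ℕ) : ℝ) * ((k : ℝ) + 2 - ((i + 1 : ℕ) : ℝ))) =
        ((i : ℝ) + 1) * ((k : ℝ) + 1 - i) := by push_cast; ring
    rw [e]
  have step : ∀ m : Fin (k + 2), (if i = (m : ℕ) then A else if i = (m : ℕ) + 1 then B
      else if (m : ℕ) = i + 1 then (starRingEnd ℂ) α * β *
        ((Real.sqrt ((m : ℝ) * ((k : ℝ) + 2 - (m : ℝ))) : ℝ) : ℂ) else 0) * f m =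
      (fun m : ℕ => (if i = m then A * f i else 0) + (if i = m + 1 then B * f (i - 1) else 0)
        + (if i + 1 = m then D * f (i + 1) else 0)) m := by
    rintro ⟨m, hm⟩
    simp only
    by_cases h1 : i = m
    · subst h1; simp
    by_cases h2 : i = m + 1
    · subst h2; simp
      omega
    by_cases h3 : m = i + 1
    · rw [if_neg h1, if_neg h2, if_pos h3, if_neg h1, if_neg h2, if_pos h3.symm, hD' m h3, h3]
      ring
    · rw [if_neg h1, if_neg h2, if_neg h3, if_neg h1, if_neg h2, if_neg (Ne.symm h3)]
      ring
  rw [Finset.sum_congr rfl fun m _ => step m, Fin.sum_univ_eq_sum_range (fun m : ℕ =>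
      (if i = m then A * f i else 0) + (if i = m + 1 then B * f (i - 1) else 0)
        + (if i + 1 = m then D * f (i + 1) else 0)) (k + 2), Finset.sum_add_distrib,
    Finset.sum_add_distrib, Finset.sum_ite_eq, Finset.sum_ite_eq, if_pos (by simpa using hi)]
  congr 1
  · congr 1
    cases i with
    | zero => simp
    | succ i =>
      simp only [Nat.add_right_cancel_iff]
      rw [Finset.sum_ite_eq, if_pos (by simp; omega)]
      simp
  · split_ifs with h
    · rfl
    · have : i + 1 = k + 2 := by simp at h; omega
      rw [this, hf, mul_zero]

lemma unruhBlock_eigen (α β : ℂ) (hαβ : ‖α‖ ^ 2 + ‖β‖ ^ 2 = 1) (k j : ℕ) (hj : j ≤ k + 1) :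
    ∃ v : Fin (k + 2) → ℂ, v ≠ 0 ∧ unruhBlock α β k *ᵥ v = (j : ℂ) • v := by
  have ha : α * (starRingEnd ℂ) α = ((‖α‖ ^ 2 : ℝ) : ℂ) := by
    rw [Complex.mul_conj, Complex.normSq_eq_norm_sq]
  have hb : β * (starRingEnd ℂ) β = ((‖β‖ ^ 2 : ℝ) : ℂ) := by
    rw [Complex.mul_conj, Complex.normSq_eq_norm_sq]
  have h : α * (starRingEnd ℂ) α + β * (starRingEnd ℂ) β = 1 := by
    rw [ha, hb, ← Complex.ofReal_add, hαβ, Complex.ofReal_one]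
  have hdeg := genPoly_natDegree α β (k + 1) j hj
  have hc : ∀ m, k + 1 < m → (genPoly α β (k + 1) j).coeff m = 0 := fun m hm =>
    Polynomial.coeff_eq_zero_of_natDegree_lt (lt_of_le_of_lt hdeg hm)
  refine ⟨fun m => (fun m : ℕ => (wt (k + 1) m : ℂ) * (genPoly α β (k + 1) j).coeff m) m, ?_, ?_⟩
  · intro h0
    apply genPoly_ne_zero α β h (k + 1) j
    ext m
    by_cases hm : m < k + 2
    · have := congrFun h0 ⟨m, hm⟩
      simpa [(wt_pos (k + 1) m).ne'] using this
    · simpa using hc m (by omega)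
  · ext i
    rw [unruhBlock_row α β k
      (fun m : ℕ => (wt (k + 1) m : ℂ) * (genPoly α β (k + 1) j).coeff m) (by simp [hc])]
    obtain ⟨i, hi⟩ := i
    simp only [Pi.smul_apply, smul_eq_mul]
    have sup : ((Real.sqrt (((i : ℝ) + 1) * ((k : ℝ) + 1 - (i : ℝ))) : ℝ) : ℂ) *
        ((wt (k + 1) (i + 1) : ℂ) * (genPoly α β (k + 1) j).coeff (i + 1)) =
        (i + 1) * wt (k + 1) i * (genPoly α β (k + 1) j).coeff (i + 1) := by
      by_cases hik : i + 1 ≤ k + 1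
      · have := congrArg (fun x : ℝ => (x : ℂ)) (wt_sup (k + 1) i hik)
        push_cast at this
        rw [← mul_assoc, this]
      · rw [hc _ (by omega)]; ring
    rw [mul_assoc _ _ ((wt (k + 1) (i + 1) : ℂ) * _), sup]
    cases i with
    | zero =>
      have := genPoly_rec_zero α β h (k + 1) j hj
      rw [hb] at this
      push_cast at this ⊢
      linear_combination (wt (k + 1) 0 : ℂ) * this
    | succ i =>
      have r := genPoly_rec_succ α β h (k + 1) j hj i
      have s := congrArg (fun x : ℝ => (x : ℂ)) (wt_sub (k + 1) i (by omega))
      have e : ((((i + 1 : ℕ) : ℝ)) * ((k : ℝ) + 2 - ((i + 1 : ℕ) : ℝ))) =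
        ((i : ℝ) + 1) * (((k + 1 : ℕ) : ℝ) - i) := by push_cast; ring
      rw [ha, hb] at r
      rw [e, if_neg (Nat.succ_ne_zero i), Nat.add_sub_cancel]
      simp only [Complex.ofReal_mul] at s
      push_cast at r s ⊢
      linear_combination (wt (k + 1) (i + 1) : ℂ) * r
        + α * (starRingEnd ℂ) β * (genPoly α β (k + 1) j).coeff i * s

/-- For `|α|² + |β|² = 1`, the Unruh block `σ_k` has characteristic polynomial
`∏_{m=0}^{k+1} (X - m)`; that is, its eigenvalues are exactly `0, 1, …, k+1`,
each with multiplicity one. -/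
theorem unruhBlock_charpoly (α β : ℂ) (hαβ : ‖α‖ ^ 2 + ‖β‖ ^ 2 = 1)
    (k : ℕ) :
    Matrix.charpoly (unruhBlock α β k) =
      ∏ m : Fin (k + 2), (Polynomial.X - Polynomial.C ((m : ℕ) : ℂ)) := by
  symm
  have hmonic : (∏ m : Fin (k + 2), (Polynomial.X - Polynomial.C ((m : ℕ) : ℂ))).Monic :=
    Polynomial.monic_prod_of_monic _ _ fun m _ => Polynomial.monic_X_sub_C _
  have hdvd : (∏ m : Fin (k + 2), (Polynomial.X - Polynomial.C ((m : ℕ) : ℂ))) ∣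
      Matrix.charpoly (unruhBlock α β k) := by
    apply Fintype.prod_dvd_of_coprime
    · exact Polynomial.pairwise_coprime_X_sub_C
        (fun a b hab => Fin.ext (by exact_mod_cast hab))
    · intro m
      rw [Polynomial.dvd_iff_isRoot, Polynomial.IsRoot, Matrix.eval_charpoly,
        ← Matrix.exists_mulVec_eq_zero_iff]
      obtain ⟨v, hv, he⟩ := unruhBlock_eigen α β hαβ k m (by omega)
      refine ⟨v, hv, ?_⟩
      rw [Matrix.sub_mulVec, he, sub_eq_zero]
      ext i
      simp [Matrix.scalar_apply, Matrix.mulVec_diagonal]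
  refine (Polynomial.eq_of_monic_of_dvd_of_natDegree_le hmonic (Matrix.charpoly_monic _) hdvd ?_).symm
  rw [Matrix.charpoly_natDegree_eq_dim, Polynomial.natDegree_prod_of_monic _ _ fun m _ => Polynomial.monic_X_sub_C _]
  simp only [Polynomial.natDegree_X_sub_C]
  simp
end
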